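/- The two-qubit state ρ̃_max = (1/6)·[[2,0,0,0],[0,1,1,0],[0,1,1,0],[0,0,0,2]] cannot be written as a sum of three (or fewer) Kronecker products: there do not exist complex 2×2 matrices F₁,F₂,F₃ and G₁,G₂,G₃ with ρ̃_max = F₁⊗ₖG₁ + F₂⊗ₖG₂ + F₃⊗ₖG₃. In particular its correlation-matrix rank L_R equals 4, which exceeds the subsystem dimension 2, so its quantum correlations are genuinely quantum (not creatable by local operations from a classical state). -/

import Mathlib

/-!
A decomposition `ρ = ∑ l, F l ⊗ₖ G l` with `n` terms is the same thing as a factorisation through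
`Fin n` of the realigned matrix `R ((i, k), (j, l)) = ρ ((i, j), (k, l))`, so `n` is at least the
rank of `R`. For `ρ̃_max` the realigned matrix is the direct sum of the blocks
`(1/6) [[2, 1], [1, 2]]` on `{(0,0), (1,1)}` and `(1/6) [[0, 1], [1, 0]]` on `{(0,1), (1,0)}`.
Both blocks are invertible, so `R` has rank 4 and three terms do not suffice. Conversely, writing
`ρ̃_max` in `2 × 2` blocks gives a decomposition with four terms.
-/


open Matrix Kronecker

noncomputable section

def e2 : Fin 2 × Fin 2 ≃ Fin 4 := finProdFinEquiv.trans (finCongr (by norm_num))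

/-- ρ̃_max, locally unitarily equivalent to the maximally discordant separable
two-qubit state. -/
def rhoTildeMax : Matrix (Fin 2 × Fin 2) (Fin 2 × Fin 2) ℂ :=
  ((1/6 : ℂ) • !![2, 0, 0, 0; 0, 1, 1, 0; 0, 1, 1, 0; 0, 0, 0, 2]).submatrix e2 e2

/-- The realignment of a matrix on `ℂ² ⊗ ℂ²`: rows are indexed by the matrix units of the first
factor, columns by those of the second. -/
def realign (M : Matrix (Fin 2 × Fin 2) (Fin 2 × Fin 2) ℂ) :
    Matrix (Fin 2 × Fin 2) (Fin 2 × Fin 2) ℂ :=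
  Matrix.of fun p q => M (p.1, q.1) (p.2, q.2)

/-- The rank of the realignment is a lower bound for the number of Kronecker products. -/
lemma rank_realign_le {n : ℕ} (F G : Fin n → Matrix (Fin 2) (Fin 2) ℂ) :
    (realign (∑ l, F l ⊗ₖ G l)).rank ≤ n := by
  have h : realign (∑ l, F l ⊗ₖ G l) =
      (Matrix.of fun (p : Fin 2 × Fin 2) (l : Fin n) => F l p.1 p.2) *
        (Matrix.of fun (l : Fin n) (q : Fin 2 × Fin 2) => G l q.1 q.2) := by
    ext p q
    simp [realign, Matrix.mul_apply, Matrix.sum_apply]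
  rw [h]
  exact (rank_mul_le_left _ _).trans ((rank_le_card_width _).trans (by simp))

lemma e2_00 : e2 (0, 0) = 0 := rfl
lemma e2_01 : e2 (0, 1) = 1 := rfl
lemma e2_10 : e2 (1, 0) = 2 := rfl
lemma e2_11 : e2 (1, 1) = 3 := rfl

lemma rank_realign_rhoTildeMax : (realign rhoTildeMax).rank = 4 := by
  -- The explicit inverse, obtained blockwise.
  have h : realign rhoTildeMax *
      (!![4, 0, 0, -2; 0, 0, 6, 0; 0, 6, 0, 0; -2, 0, 0, 4] : Matrix _ _ ℂ).submatrix e2 e2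
        = 1 := by
    ext ⟨i, k⟩ ⟨j, l⟩
    fin_cases i <;> fin_cases k <;> fin_cases j <;> fin_cases l <;>
      simp [realign, rhoTildeMax, Matrix.mul_apply, Fintype.sum_prod_type, e2_00, e2_01, e2_10,
        e2_11] <;> norm_num
  simpa using rank_of_isUnit _ (IsUnit.of_mul_eq_one _ h)

/-- ρ̃_max is not a sum of three Kronecker products, while it is
a sum of four; its correlation-matrix rank is 4 > 2, so its quantum
correlations are genuine. -/
theorem rhoTildeMax_correlation_rank_four :
    (¬ ∃ F G : Fin 3 → Matrix (Fin 2) (Fin 2) ℂ,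
      rhoTildeMax = ∑ l, F l ⊗ₖ G l) ∧
    (∃ F G : Fin 4 → Matrix (Fin 2) (Fin 2) ℂ,
      rhoTildeMax = ∑ l, F l ⊗ₖ G l) := by
  constructor
  · rintro ⟨F, G, h⟩
    have h3 := rank_realign_le F G
    rw [← h, rank_realign_rhoTildeMax] at h3
    omega
  -- The `F l` are the matrix units, the `G l` the corresponding `2 × 2` blocks of `ρ̃_max`.
  · refine ⟨![!![1, 0; 0, 0], !![0, 1; 0, 0], !![0, 0; 1, 0], !![0, 0; 0, 1]],
      ![!![1/3, 0; 0, 1/6], !![0, 0; 1/6, 0], !![0, 1/6; 0, 0], !![1/6, 0; 0, 1/3]], ?_⟩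
    ext ⟨i, j⟩ ⟨k, l⟩
    fin_cases i <;> fin_cases j <;> fin_cases k <;> fin_cases l <;>
      simp [rhoTildeMax, Fin.sum_univ_four, e2_00, e2_01, e2_10, e2_11] <;> norm_num
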